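/- arXiv:2508.18270 — 2 statements merged into one kernel-verified Lean document; each statement's English description precedes it below -/
import Mathlib

section
/- With the construction below, for all disjoint subsets I, J ⊆ {1,...,n}, not both empty, one has |∑_{i∈I} a_i − ∑_{j∈J} a_j| ≥ 2·n. -/
/-!
The products `∏ i ∈ I, (1 - 1 / p i)` and `∏ j ∈ J, (1 - 1 / p j)` differ for disjoint `I`, `J`,
not both empty: after clearing denominators, the largest prime occurring divides exactly one of
the two sides. Hence the weights `-log (1 - 1 / p i)` have a positive subset sum gap `ε`.
Scaling by `x` turns it into a gap of at least `4n`. Rounding down costs at most `1` per index,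
leaving `3n`; multiplying by a nonzero integer does not shrink the gap, and adding at most `1`
per index again leaves `2n`.
-/

theorem abs_sum_sub_sum_le_sum_abs {ι R : Type*} [Fintype ι] [AddCommGroup R]
    [LinearOrder R] [IsOrderedAddMonoid R] (r : ι → R) {I J : Finset ι} (hIJ : Disjoint I J) :
    |∑ i ∈ I, r i - ∑ j ∈ J, r j| ≤ ∑ i, |r i| :=
  calc |∑ i ∈ I, r i - ∑ j ∈ J, r j|
      ≤ |∑ i ∈ I, r i| + |∑ j ∈ J, r j| := abs_sub _ _
    _ ≤ ∑ i ∈ I, |r i| + ∑ j ∈ J, |r j| :=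
      add_le_add (Finset.abs_sum_le_sum_abs _ _) (Finset.abs_sum_le_sum_abs _ _)
    _ = ∑ i ∈ I.disjUnion J hIJ, |r i| := (Finset.sum_disjUnion hIJ).symm
    _ ≤ ∑ i, |r i| := Finset.sum_le_univ_sum_of_nonneg fun i => abs_nonneg (r i)

section SubsetSumGap

variable {ι R : Type*} [DecidableEq ι]

/-- The sums of `v` over any two disjoint index sets, not both empty, differ by at least `δ`.
Chvátal's construction turns such a gap for real weights into one for integers. -/
def HasSubsetSumGap [AddCommGroup R] [LinearOrder R] (v : ι → R) (δ : R) : Prop :=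
  ∀ I J : Finset ι, Disjoint I J → (I ∪ J).Nonempty → δ ≤ |∑ i ∈ I, v i - ∑ j ∈ J, v j|

namespace HasSubsetSumGap

theorem mono [AddCommGroup R] [LinearOrder R] {v : ι → R} {δ δ' : R}
    (h : HasSubsetSumGap v δ) (hδ : δ' ≤ δ) : HasSubsetSumGap v δ' :=
  fun I J hIJ hne => hδ.trans (h I J hIJ hne)

theorem le_abs_apply [AddCommGroup R] [LinearOrder R] {v : ι → R} {δ : R}
    (h : HasSubsetSumGap v δ) (i : ι) : δ ≤ |v i| := by
  simpa using h {i} ∅ (Finset.disjoint_empty_right _) (by simp)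

theorem of_abs_sub_le [Fintype ι] [AddCommGroup R] [LinearOrder R] [IsOrderedAddMonoid R]
    {u v : ι → R} {δ η : R} (h : HasSubsetSumGap v δ) (huv : ∀ i, |u i - v i| ≤ η) :
    HasSubsetSumGap u (δ - Fintype.card ι • η) := by
  intro I J hIJ hne
  have herror : |∑ i ∈ I, (v i - u i) - ∑ j ∈ J, (v j - u j)| ≤ Fintype.card ι • η :=
    (abs_sum_sub_sum_le_sum_abs _ hIJ).trans
      (Finset.sum_le_card_nsmul _ _ _ fun i _ => abs_sub_comm (u i) (v i) ▸ huv i)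
  rw [Finset.sum_sub_distrib, Finset.sum_sub_distrib, sub_sub_sub_comm] at herror
  rw [sub_le_comm]
  exact (sub_le_sub_right (h I J hIJ hne) _).trans ((abs_sub_abs_le_abs_sub _ _).trans herror)

theorem const_mul [Ring R] [LinearOrder R] [IsOrderedRing R] {v : ι → R} {δ : R}
    (h : HasSubsetSumGap v δ) (c : R) : HasSubsetSumGap (fun i => c * v i) (|c| * δ) := by
  intro I J hIJ hne
  rw [← Finset.mul_sum, ← Finset.mul_sum, ← mul_sub, abs_mul]
  exact mul_le_mul_of_nonneg_left (h I J hIJ hne) (abs_nonneg c)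

theorem floor_mul_pos [Ring R] [LinearOrder R] [IsStrictOrderedRing R] [FloorRing R] {v : ι → R}
    {δ x : R} (h : HasSubsetSumGap v δ) {i : ι} (hv : 0 ≤ v i) (hx : 0 ≤ x) (hδ : 1 ≤ δ * x) :
    0 < ⌊v i * x⌋ :=
  Int.floor_pos.2
    (hδ.trans (mul_le_mul_of_nonneg_right (abs_of_nonneg hv ▸ h.le_abs_apply i) hx))

theorem of_intCast [Ring R] [LinearOrder R] [IsStrictOrderedRing R] {v : ι → ℤ} {δ : ℤ}
    (h : HasSubsetSumGap (fun i => (v i : R)) δ) : HasSubsetSumGap v δ :=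
  fun I J hIJ hne => by
    have hcast := h I J hIJ hne
    dsimp only at hcast
    exact_mod_cast hcast

theorem floor [Fintype ι] [Ring R] [LinearOrder R] [IsStrictOrderedRing R] [FloorRing R]
    {v : ι → R} {δ : ℤ} (h : HasSubsetSumGap v δ) :
    HasSubsetSumGap (fun i => ⌊v i⌋) (δ - Fintype.card ι) := by
  have hfloor (i : ι) : |(⌊v i⌋ : R) - v i| ≤ 1 := by
    rw [abs_sub_comm, Int.self_sub_floor, Int.abs_fract]
    exact (Int.fract_lt_one _).le
  exact of_intCast (R := R) (by simpa using h.of_abs_sub_le hfloor)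

theorem of_abs_sub_mul_floor_le [Fintype ι] [CommRing R] [LinearOrder R]
    [IsStrictOrderedRing R] [FloorRing R] {w : ι → R} {ε x : R} (hw : HasSubsetSumGap w ε)
    (hx : 4 * Fintype.card ι ≤ ε * |x|) {c : ℤ} (hc : c ≠ 0) {a : ι → ℤ}
    (ha : ∀ i, |a i - c * ⌊w i * x⌋| ≤ 1) :
    HasSubsetSumGap a (2 * Fintype.card ι) := by
  have hscaled : HasSubsetSumGap (fun i => w i * x) ((4 * Fintype.card ι : ℤ) : R) := by
    simpa only [mul_comm x] using (hw.const_mul x).mono (by exact_mod_cast mul_comm ε |x| ▸ hx)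
  have hfloor : HasSubsetSumGap (fun i => ⌊w i * x⌋) (3 * Fintype.card ι) :=
    hscaled.floor.mono (by linarith)
  have hmul : HasSubsetSumGap (fun i => c * ⌊w i * x⌋) (3 * Fintype.card ι) :=
    (hfloor.const_mul c).mono (le_mul_of_one_le_left (by positivity) (Int.one_le_abs hc))
  refine (hmul.of_abs_sub_le ha).mono ?_
  rw [nsmul_one]
  linarith

end HasSubsetSumGap

theorem chvatal_disjoint_sums_gap_general {K : Type*} [Fintype ι] [Field K] [LinearOrder K]
    [IsStrictOrderedRing K] [FloorRing K] {w : ι → K} (hw : ∀ i, 0 < w i) {ε : K} (hε : 0 < ε)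
    (hgap : HasSubsetSumGap w ε) {x : K} (hx : 4 * Fintype.card ι / ε < x) {P : ι → Prop}
    [DecidablePred P] {c : ℕ} (hc : c = (Finset.univ.filter P).lcm fun i => ⌊w i * x⌋.toNat)
    {a : ι → ℕ}
    (ha : ∀ i, a i = if P i then c * ⌊w i * x⌋.toNat else c * ⌊w i * x⌋.toNat + 1) :
    HasSubsetSumGap (fun i => (a i : ℤ)) (2 * Fintype.card ι) := by
  have hx₀ : 0 < x := lt_of_le_of_lt (by positivity) hx
  have hεx : 4 * Fintype.card ι ≤ ε * x := (div_le_iff₀' hε).1 hx.le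
  have hfloor (i : ι) : 0 < ⌊w i * x⌋ := by
    have hcard : (1 : K) ≤ Fintype.card ι := Nat.one_le_cast.2 (Fintype.card_pos_iff.2 ⟨i⟩)
    exact hgap.floor_mul_pos (hw i).le hx₀.le (by linarith)
  have hc₀ : c ≠ 0 := by
    simpa [hc, Finset.lcm_eq_zero_iff] using fun i _ => hfloor i
  have ha' (i : ι) : |(a i : ℤ) - c * ⌊w i * x⌋| ≤ 1 := by
    rw [ha, ← Int.toNat_of_nonneg (hfloor i).le]
    split_ifs <;> simp
  exact hgap.of_abs_sub_mul_floor_le (by rwa [abs_of_pos hx₀]) (Nat.cast_ne_zero.2 hc₀) ha'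

end SubsetSumGap

section PrimeWeights

variable {ι : Type*} {p : ι → ℕ}

theorem not_dvd_prod_sub_one_mul_prod (hp : ∀ i, (p i).Prime) (hinj : Function.Injective p)
    {I J : Finset ι} {k : ι} (hkJ : k ∉ J) (hmax : ∀ i ∈ I, p i ≤ p k) :
    ¬ p k ∣ (∏ i ∈ I, (p i - 1)) * ∏ j ∈ J, p j := by
  have hk := (hp k).prime
  rw [hk.dvd_mul, hk.dvd_finsetProd_iff, hk.dvd_finsetProd_iff]
  rintro (⟨i, hi, hdvd⟩ | ⟨j, hj, hdvd⟩)
  · have hlt : p i - 1 < p k := (Nat.sub_one_lt (hp i).ne_zero).trans_le (hmax i hi)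
    exact Nat.not_dvd_of_pos_of_lt (Nat.sub_pos_of_lt (hp i).one_lt) hlt hdvd
  · exact hkJ (hinj ((Nat.prime_dvd_prime_iff_eq (hp k) (hp j)).1 hdvd) ▸ hj)

theorem prod_sub_one_mul_prod_ne [DecidableEq ι] (hp : ∀ i, (p i).Prime)
    (hinj : Function.Injective p) {I J : Finset ι} (hIJ : Disjoint I J) (hne : (I ∪ J).Nonempty) :
    (∏ i ∈ I, (p i - 1)) * ∏ j ∈ J, p j ≠ (∏ j ∈ J, (p j - 1)) * ∏ i ∈ I, p i := by
  intro heq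
  obtain ⟨k, hk, hmax⟩ := Finset.exists_max_image (I ∪ J) p hne
  rcases Finset.mem_union.1 hk with hkI | hkJ
  · refine not_dvd_prod_sub_one_mul_prod hp hinj (Finset.disjoint_left.1 hIJ hkI)
      (fun i hi => hmax i (Finset.mem_union_left _ hi)) ?_
    exact heq ▸ (Finset.dvd_prod_of_mem p hkI).mul_left _
  · refine not_dvd_prod_sub_one_mul_prod hp hinj (Finset.disjoint_right.1 hIJ hkJ)
      (fun j hj => hmax j (Finset.mem_union_right _ hj)) ?_
    exact heq ▸ (Finset.dvd_prod_of_mem p hkJ).mul_left _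

theorem prod_one_sub_one_div {K : Type*} [Field K] [CharZero K] (hp : ∀ i, p i ≠ 0)
    (I : Finset ι) :
    ∏ i ∈ I, (1 - 1 / (p i : K)) = (∏ i ∈ I, (p i - 1) : ℕ) / (∏ i ∈ I, p i : ℕ) := by
  rw [Nat.cast_prod, Nat.cast_prod, ← Finset.prod_div_distrib]
  refine Finset.prod_congr rfl fun i _ => ?_
  rw [Nat.cast_pred (Nat.pos_of_ne_zero (hp i)), sub_div, div_self (Nat.cast_ne_zero.2 (hp i))]

theorem prod_one_sub_one_div_ne [DecidableEq ι] {K : Type*} [Field K] [CharZero K]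
    (hp : ∀ i, (p i).Prime) (hinj : Function.Injective p) {I J : Finset ι} (hIJ : Disjoint I J)
    (hne : (I ∪ J).Nonempty) :
    ∏ i ∈ I, (1 - 1 / (p i : K)) ≠ ∏ j ∈ J, (1 - 1 / (p j : K)) := by
  have hprod (S : Finset ι) : ((∏ i ∈ S, p i : ℕ) : K) ≠ 0 :=
    Nat.cast_ne_zero.2 (Finset.prod_ne_zero_iff.2 fun i _ => (hp i).ne_zero)
  have hp₀ (i : ι) : p i ≠ 0 := (hp i).ne_zero
  rw [prod_one_sub_one_div hp₀, prod_one_sub_one_div hp₀, Ne, div_eq_div_iff (hprod I) (hprod J)]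
  exact_mod_cast prod_sub_one_mul_prod_ne hp hinj hIJ hne

theorem one_sub_one_div_pos {K : Type*} [Field K] [LinearOrder K] [IsStrictOrderedRing K] {y : K}
    (hy : 1 < y) : 0 < 1 - 1 / y :=
  sub_pos.2 ((div_lt_one (one_pos.trans hy)).2 hy)

theorem neg_log_one_sub_one_div_pos {y : ℝ} (hy : 1 < y) : 0 < -Real.log (1 - 1 / y) :=
  neg_pos.2 (Real.log_neg (one_sub_one_div_pos hy)
    (sub_lt_self _ (one_div_pos.2 (one_pos.trans hy))))

theorem sum_neg_log_one_sub_one_div_ne [DecidableEq ι] (hp : ∀ i, (p i).Prime)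
    (hinj : Function.Injective p) {I J : Finset ι} (hIJ : Disjoint I J) (hne : (I ∪ J).Nonempty) :
    ∑ i ∈ I, -Real.log (1 - 1 / (p i : ℝ)) ≠ ∑ j ∈ J, -Real.log (1 - 1 / (p j : ℝ)) := by
  have hpos (i : ι) : 0 < 1 - 1 / (p i : ℝ) := one_sub_one_div_pos (Nat.one_lt_cast.2 (hp i).one_lt)
  simp only [Finset.sum_neg_distrib, ← Real.log_prod fun i _ => (hpos i).ne', ne_eq, neg_inj]
  exact Real.log_injOn_pos.ne (Finset.prod_pos fun i _ => hpos i)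
    (Finset.prod_pos fun j _ => hpos j) (prod_one_sub_one_div_ne hp hinj hIJ hne)

end PrimeWeights

open Finset in
/-- In Chvátal's construction, disjoint not-both-empty subsets have subset sums differing by at least `2n`. -/
theorem chvatal_disjoint_sums_gap
    (n : ℕ) (hn : 1 ≤ n)
    (p : Fin n → ℕ) (hp : ∀ i, (p i).Prime) (hinj : Function.Injective p)
    (w : Fin n → ℝ) (hw : ∀ i, w i = -Real.log (1 - 1 / (p i : ℝ)))
    (hmono : ∀ i j : Fin n, i ≤ j → w j ≤ w i)
    (hratio : w ⟨0, by omega⟩ ≤ 2 * w ⟨n - 1, by omega⟩)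
    (ε : ℝ)
    (hε : IsLeast {d : ℝ | ∃ I J : Finset (Fin n), Disjoint I J ∧ (I ∪ J).Nonempty ∧
        d = |∑ i ∈ I, w i - ∑ j ∈ J, w j|} ε)
    (x : ℝ) (hx : 4 * n / ε < x)
    (c : ℕ)
    (hc : c = ((Finset.univ : Finset (Fin n)).filter fun i : Fin n => (i : ℕ) < n / 2).lcm
        fun i => (⌊w i * x⌋).toNat)
    (a : Fin n → ℕ)
    (ha : ∀ i : Fin n, a i = if (i : ℕ) < n / 2 then c * (⌊w i * x⌋).toNat
        else c * (⌊w i * x⌋).toNat + 1)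
    : ∀ I J : Finset (Fin n), Disjoint I J → (I ∪ J).Nonempty → (2 * n : ℤ) ≤ |∑ i ∈ I, (a i : ℤ) - ∑ j ∈ J, (a j : ℤ)| := by
  have hgap : HasSubsetSumGap w ε := fun I J hIJ hne => hε.2 ⟨I, J, hIJ, hne, rfl⟩
  have hε₀ : 0 < ε := by
    obtain ⟨I, J, hIJ, hne, rfl⟩ := hε.1
    simpa only [hw, abs_pos, sub_ne_zero] using sum_neg_log_one_sub_one_div_ne hp hinj hIJ hne
  have hw₀ (i : Fin n) : 0 < w i :=
    hw i ▸ neg_log_one_sub_one_div_pos (Nat.one_lt_cast.2 (hp i).one_lt)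
  simpa only [HasSubsetSumGap, Fintype.card_fin] using
    chvatal_disjoint_sums_gap_general hw₀ hε₀ hgap (by rwa [Fintype.card_fin]) hc ha
end

section
/- With the construction below, there is no subset I ⊆ {1,...,n} such that ∑_{i∈I} a_i = ⌊(∑_{i=1}^{n} a_i)/2⌋ (Chvátal's condition (d)). -/
/-!
The weights `-log (1 - 1 / p)` of distinct primes are linearly independent over `ℤ`: in a
multiplicative relation `∏ (1 - 1 / q) ^ g q = 1`, every factor with `q` below the largest prime `p`
involved is a `p`-adic unit, whereas `1 - 1 / p` is not. Hence `ε > 0`, and every partition of the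
index set into `I` and its complement has weight difference at least `ε` in absolute value.
Each `a i` is within `c` of `c * x * w i`, so if `I` had half of the total `∑ i, a i` up to
rounding, its weight difference would be at most `(n + 1 / c) / x < ε`.
-/

/-- The weight `-log (1 - 1 / p)` that the construction attaches to a prime `p`. -/
noncomputable def primeWeight (p : ℕ) : ℝ :=
  -Real.log (1 - 1 / (p : ℝ))

/-- The distances between the `w`-sums of two disjoint index sets, not both empty. The paper's `ε`
is the least element of this set. -/
def disjointSumGaps {ι : Type*} [DecidableEq ι] (w : ι → ℝ) : Set ℝ :=
  {d | ∃ I J : Finset ι, Disjoint I J ∧ (I ∪ J).Nonempty ∧ d = |∑ i ∈ I, w i - ∑ j ∈ J, w j|}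

/-- The difference between the `f`-sum of `I` and that of its complement, which measures how
far `I` is from having half of the total. -/
def partitionGap {ι : Type*} [Fintype ι] [DecidableEq ι] (f : ι → ℝ) (I : Finset ι) : ℝ :=
  ∑ i ∈ I, f i - ∑ i ∈ Iᶜ, f i

section PadicNorm

variable {p : ℕ} [Fact p.Prime]

theorem padic_norm_natCast_eq_one_of_lt {n : ℕ} (hn : n ≠ 0) (hnp : n < p) :
    ‖(n : ℚ_[p])‖ = 1 :=
  Padic.norm_natCast_eq_one_iff.2 (Nat.coprime_of_lt_prime hn hnp Fact.out)

theorem padic_norm_one_sub_one_div {q : ℕ} (hq : 1 < q) (hqp : q ≤ p) :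
    ‖(1 - 1 / q : ℚ_[p])‖ = ‖(q : ℚ_[p])‖⁻¹ := by
  have hq₀ : (q : ℚ_[p]) ≠ 0 := by exact_mod_cast (zero_lt_one.trans hq).ne'
  have hfrac : (1 - 1 / q : ℚ_[p]) = (q - 1 : ℕ) / q := by
    rw [Nat.cast_sub hq.le, Nat.cast_one, sub_div, div_self hq₀]
  rw [hfrac, norm_div, padic_norm_natCast_eq_one_of_lt (by lia) (by lia), one_div]

theorem padic_norm_one_sub_one_div_of_lt {q : ℕ} (hq : 1 < q) (hqp : q < p) :
    ‖(1 - 1 / q : ℚ_[p])‖ = 1 := by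
  rw [padic_norm_one_sub_one_div hq hqp.le, padic_norm_natCast_eq_one_of_lt (by lia) hqp, inv_one]

theorem padic_norm_one_sub_one_div_self : ‖(1 - 1 / p : ℚ_[p])‖ = p := by
  rw [padic_norm_one_sub_one_div (Fact.out : p.Prime).one_lt le_rfl, Padic.norm_p, inv_inv]

end PadicNorm

section PrimeWeight

theorem one_sub_one_div_pos_s14 {p : ℕ} (hp : 1 < p) : 0 < 1 - 1 / (p : ℝ) :=
  sub_pos.2 ((div_lt_one (by positivity)).2 (by exact_mod_cast hp))

theorem primeWeight_nonneg (p : ℕ) : 0 ≤ primeWeight p := by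
  have hinv : 1 / (p : ℝ) ≤ 1 := by simpa using Nat.cast_inv_le_one p
  exact neg_nonneg.2 (Real.log_nonpos (sub_nonneg.2 hinv) (sub_le_self _ (by positivity)))

theorem eq_zero_of_prod_one_sub_one_div_zpow_eq_one {s : Finset Nat.Primes}
    {g : Nat.Primes → ℤ} (hprod : ∏ q ∈ s, (1 - 1 / (q : ℚ)) ^ g q = 1) :
    ∀ q ∈ s, g q = 0 := by
  by_contra! hne
  obtain ⟨p, hp, hmax⟩ := Finset.exists_max_image (s.filter (g · ≠ 0)) (fun q ↦ (q : ℕ))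
    (Finset.filter_nonempty_iff.2 hne)
  obtain ⟨hps, hgp⟩ := Finset.mem_filter.1 hp
  have : Fact (p : ℕ).Prime := ⟨p.2⟩
  have hunit : ∀ q ∈ s, q ≠ p → ‖(1 - 1 / (q : ℕ) : ℚ_[p])‖ ^ g q = 1 := by
    intro q hq hqp
    by_cases hgq : g q = 0
    · rw [hgq, zpow_zero]
    · have hlt : (q : ℕ) < p :=
        (hmax q (Finset.mem_filter.2 ⟨hq, hgq⟩)).lt_of_ne (Subtype.coe_injective.ne hqp)
      rw [padic_norm_one_sub_one_div_of_lt q.2.one_lt hlt, one_zpow]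
  have hnorm : ((p : ℕ) : ℝ) ^ g p = 1 := calc
    ((p : ℕ) : ℝ) ^ g p = ∏ q ∈ s, ‖(1 - 1 / (q : ℕ) : ℚ_[p])‖ ^ g q := by
      rw [Finset.prod_eq_single_of_mem p hps hunit, padic_norm_one_sub_one_div_self]
    _ = ‖∏ q ∈ s, (1 - 1 / (q : ℕ) : ℚ_[p]) ^ g q‖ := by simp only [norm_prod, norm_zpow]
    _ = 1 := by
      have hcast := congrArg (Rat.cast : ℚ → ℚ_[p]) hprod
      push_cast at hcast
      rw [hcast, norm_one]
  exact hgp ((zpow_eq_one_iff_right₀ (by positivity) (by exact_mod_cast p.2.ne_one)).1 hnorm)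

theorem linearIndependent_primeWeight :
    LinearIndependent ℤ (fun p : Nat.Primes ↦ primeWeight p) := by
  refine linearIndependent_iff'.2 fun s g hsum ↦
    eq_zero_of_prod_one_sub_one_div_zpow_eq_one ?_
  have hpos : ∀ q : Nat.Primes, 0 < (1 - 1 / (q : ℝ)) ^ g q := fun q ↦
    zpow_pos (one_sub_one_div_pos_s14 q.2.one_lt) _
  have hlog : Real.log (∏ q ∈ s, (1 - 1 / (q : ℝ)) ^ g q) = 0 := by
    rw [Real.log_prod fun q _ ↦ (hpos q).ne', ← neg_eq_zero, ← hsum, ← Finset.sum_neg_distrib]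
    simp only [Real.log_zpow, primeWeight, zsmul_eq_mul, mul_neg]
  apply Rat.cast_injective (α := ℝ)
  push_cast
  exact Real.eq_one_of_pos_of_log_eq_zero (Finset.prod_pos fun q _ ↦ hpos q) hlog

theorem linearIndependent_primeWeight_comp {ι : Type*} {p : ι → ℕ} (hp : ∀ i, (p i).Prime)
    (hinj : Function.Injective p) : LinearIndependent ℤ (primeWeight ∘ p) :=
  linearIndependent_primeWeight.comp (fun i ↦ ⟨p i, hp i⟩) fun _ _ hij ↦
    hinj (congrArg Subtype.val hij)

end PrimeWeight

theorem injective_finset_sum_of_linearIndependent {R M ι : Type*} [Semiring R] [Nontrivial R]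
    [AddCommMonoid M] [Module R M] {v : ι → M} (hv : LinearIndependent R v) :
    Function.Injective fun I : Finset ι ↦ ∑ i ∈ I, v i := by
  classical
  intro I J hIJ
  have hcoeff := linearIndependent_iff'ₛ.1 hv (I ∪ J) (fun i ↦ if i ∈ I then 1 else 0)
    (fun i ↦ if i ∈ J then 1 else 0) (by simpa [ite_smul, Finset.sum_ite_mem] using hIJ)
  ext i
  by_cases hi : i ∈ I ∪ J
  · have := hcoeff i hi
    by_cases hI : i ∈ I <;> by_cases hJ : i ∈ J <;> simp_all
  · simp_all

section DisjointSumGaps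

variable {ι : Type*} [DecidableEq ι] {w : ι → ℝ} {ε : ℝ}

theorem pos_of_mem_disjointSumGaps (hw : LinearIndependent ℤ w) (hε : ε ∈ disjointSumGaps w) :
    0 < ε := by
  obtain ⟨I, J, hdisj, hne, rfl⟩ := hε
  refine abs_pos.2 (sub_ne_zero.2 fun hsum ↦ hne.ne_empty ?_)
  obtain rfl : I = J := injective_finset_sum_of_linearIndependent hw hsum
  rw [Finset.union_self, disjoint_self.1 hdisj, Finset.bot_eq_empty]

theorem le_abs_of_mem_lowerBounds_disjointSumGaps (hε : ε ∈ lowerBounds (disjointSumGaps w))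
    (i : ι) : ε ≤ |w i| :=
  hε ⟨{i}, ∅, by simp, by simp, by simp⟩

theorem one_le_mul_of_mem_lowerBounds_disjointSumGaps (hε : ε ∈ lowerBounds (disjointSumGaps w))
    {x : ℝ} (hx : 0 ≤ x) (hxε : 1 ≤ x * ε) {i : ι} (hi : 0 ≤ w i) : 1 ≤ w i * x := calc
  1 ≤ x * ε := hxε
  _ ≤ x * |w i| := by gcongr; exact le_abs_of_mem_lowerBounds_disjointSumGaps hε i
  _ = w i * x := by rw [abs_of_nonneg hi, mul_comm]

theorem le_abs_partitionGap_of_mem_lowerBounds_disjointSumGaps [Fintype ι] [Nonempty ι]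
    (hε : ε ∈ lowerBounds (disjointSumGaps w)) (I : Finset ι) : ε ≤ |partitionGap w I| :=
  hε ⟨I, Iᶜ, disjoint_compl_right, by simp, rfl⟩

end DisjointSumGaps

section PartitionGap

variable {ι : Type*} [Fintype ι] [DecidableEq ι]

theorem abs_partitionGap_le (f : ι → ℝ) (I : Finset ι) : |partitionGap f I| ≤ ∑ i, |f i| := calc
  |partitionGap f I| ≤ |∑ i ∈ I, f i| + |∑ i ∈ Iᶜ, f i| := abs_sub _ _
  _ ≤ ∑ i ∈ I, |f i| + ∑ i ∈ Iᶜ, |f i| := by gcongr <;> exact Finset.abs_sum_le_sum_abs _ _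
  _ = ∑ i, |f i| := Finset.sum_add_sum_compl I _

theorem abs_partitionGap_sub_mul_partitionGap_le {f g : ι → ℝ} {t δ : ℝ}
    (hfg : ∀ i, |f i - t * g i| ≤ δ) (I : Finset ι) :
    |partitionGap f I - t * partitionGap g I| ≤ Fintype.card ι * δ := calc
  |partitionGap f I - t * partitionGap g I| = |partitionGap (fun i ↦ f i - t * g i) I| := by
    simp only [partitionGap, Finset.sum_sub_distrib, ← Finset.mul_sum]
    rw [mul_sub, sub_sub_sub_comm]
  _ ≤ ∑ i, |f i - t * g i| := abs_partitionGap_le _ I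
  _ ≤ ∑ _i : ι, δ := Finset.sum_le_sum fun i _ ↦ hfg i
  _ = Fintype.card ι * δ := by simp

theorem abs_partitionGap_le_one_of_sum_eq_half {a : ι → ℕ} {I : Finset ι}
    (hI : ∑ i ∈ I, a i = (∑ i, a i) / 2) : |partitionGap (fun i ↦ (a i : ℝ)) I| ≤ 1 := by
  have htotal := Finset.sum_add_sum_compl I a
  have hle : ∑ i ∈ I, a i ≤ ∑ i ∈ Iᶜ, a i + 1 := by lia
  have hge : ∑ i ∈ Iᶜ, a i ≤ ∑ i ∈ I, a i + 1 := by lia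
  rw [partitionGap, abs_sub_le_iff, sub_le_iff_le_add', sub_le_iff_le_add']
  constructor <;> norm_cast

end PartitionGap

section Rounding

theorem abs_sub_mul_le_of_eq_mul_floor {y : ℝ} (hy : 0 ≤ y) {a c : ℕ} (hc : 0 < c)
    (ha : a = c * ⌊y⌋₊ ∨ a = c * ⌊y⌋₊ + 1) : |(a : ℝ) - c * y| ≤ c := by
  have hc₁ : (1 : ℝ) ≤ c := by exact_mod_cast hc
  have hlower : (c : ℝ) * ⌊y⌋₊ ≤ c * y := by gcongr; exact Nat.floor_le hy
  have hupper : (c : ℝ) * y ≤ c * (⌊y⌋₊ + 1) := by gcongr; exact (Nat.lt_floor_add_one y).le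
  rw [abs_le]
  rcases ha with rfl | rfl <;> push_cast <;> constructor <;> linarith

theorem lcm_floor_pos {ι : Type*} {s : Finset ι} {y : ι → ℝ} (hy : ∀ i ∈ s, 1 ≤ y i) :
    0 < s.lcm fun i ↦ ⌊y i⌋₊ :=
  Nat.pos_of_ne_zero (Finset.lcm_ne_zero_iff.2 fun i hi ↦ (Nat.floor_pos.2 (hy i hi)).ne')

end Rounding

theorem chvatal_condition_d_general {ι : Type*} [Fintype ι] [DecidableEq ι] {w : ι → ℝ}
    (hw : ∀ i, 0 ≤ w i) {ε : ℝ} (hε : 0 < ε) (hgap : ∀ I, ε ≤ |partitionGap w I|)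
    {x : ℝ} (hx : Fintype.card ι + 1 < x * ε) {c : ℕ} (hc : 0 < c) {a : ι → ℕ}
    (ha : ∀ i, a i = c * ⌊w i * x⌋₊ ∨ a i = c * ⌊w i * x⌋₊ + 1) :
    ¬ ∃ I : Finset ι, ∑ i ∈ I, a i = (∑ i, a i) / 2 := by
  rintro ⟨I, hI⟩
  have hx₀ : 0 < x := pos_of_mul_pos_left (lt_trans (by positivity) hx) hε.le
  have hc₁ : (1 : ℝ) ≤ c := by exact_mod_cast hc
  have hround : ∀ i, |(a i : ℝ) - c * x * w i| ≤ c := fun i ↦ by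
    rw [mul_assoc, mul_comm x]
    exact abs_sub_mul_le_of_eq_mul_floor (mul_nonneg (hw i) hx₀.le) hc (ha i)
  have hsmall : c * x * |partitionGap w I| ≤ 1 + Fintype.card ι * c := calc
    c * x * |partitionGap w I| = |c * x * partitionGap w I| := by
      rw [abs_mul, abs_of_pos (by positivity : 0 < c * x)]
    _ ≤ |partitionGap (fun i ↦ (a i : ℝ)) I| +
        |partitionGap (fun i ↦ (a i : ℝ)) I - c * x * partitionGap w I| := by
      rw [← sub_le_iff_le_add', abs_sub_comm (partitionGap _ I)]
      exact abs_sub_abs_le_abs_sub _ _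
    _ ≤ 1 + Fintype.card ι * c :=
      add_le_add (abs_partitionGap_le_one_of_sum_eq_half hI)
        (abs_partitionGap_sub_mul_partitionGap_le hround I)
  have hlarge : 1 + Fintype.card ι * c < c * x * |partitionGap w I| := calc
    (1 + Fintype.card ι * c : ℝ) ≤ c * (Fintype.card ι + 1) := by linarith
    _ < c * (x * ε) := by gcongr
    _ ≤ c * x * |partitionGap w I| := by rw [← mul_assoc]; gcongr; exact hgap I
  exact hlarge.not_ge hsmall

open Finset in
/-- Chvátal's condition (d): no subset sum equals `⌊(∑ᵢ aᵢ)/2⌋`. -/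
theorem chvatal_condition_d
    (n : ℕ) (hn : 1 ≤ n)
    (p : Fin n → ℕ) (hp : ∀ i, (p i).Prime) (hinj : Function.Injective p)
    (w : Fin n → ℝ) (hw : ∀ i, w i = -Real.log (1 - 1 / (p i : ℝ)))
    (hmono : ∀ i j : Fin n, i ≤ j → w j ≤ w i)
    (hratio : w ⟨0, by omega⟩ ≤ 2 * w ⟨n - 1, by omega⟩)
    (ε : ℝ)
    (hε : IsLeast {d : ℝ | ∃ I J : Finset (Fin n), Disjoint I J ∧ (I ∪ J).Nonempty ∧
        d = |∑ i ∈ I, w i - ∑ j ∈ J, w j|} ε)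
    (x : ℝ) (hx : 4 * n / ε < x)
    (c : ℕ)
    (hc : c = ((Finset.univ : Finset (Fin n)).filter fun i : Fin n => (i : ℕ) < n / 2).lcm
        fun i => (⌊w i * x⌋).toNat)
    (a : Fin n → ℕ)
    (ha : ∀ i : Fin n, a i = if (i : ℕ) < n / 2 then c * (⌊w i * x⌋).toNat
        else c * (⌊w i * x⌋).toNat + 1)
    : ¬ ∃ I : Finset (Fin n), ∑ i ∈ I, a i = (∑ i : Fin n, a i) / 2 := by
  obtain rfl : w = primeWeight ∘ p := funext hw
  simp only [Int.floor_toNat] at hc ha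
  have hε₀ : 0 < ε := pos_of_mem_disjointSumGaps (linearIndependent_primeWeight_comp hp hinj) hε.1
  have hn₁ : (1 : ℝ) ≤ n := by exact_mod_cast hn
  have hxε : 4 * n < x * ε := (div_lt_iff₀ hε₀).1 hx
  have hx₀ : 0 < x := lt_of_le_of_lt (by positivity) hx
  have hw₀ : ∀ i, 0 ≤ (primeWeight ∘ p) i := fun i ↦ primeWeight_nonneg (p i)
  have hc₀ : 0 < c := hc ▸ lcm_floor_pos fun i _ ↦
    one_le_mul_of_mem_lowerBounds_disjointSumGaps hε.2 hx₀.le (by linarith) (hw₀ i)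
  have hx_large : Fintype.card (Fin n) + 1 < x * ε := by rw [Fintype.card_fin]; linarith
  have : Nonempty (Fin n) := ⟨0, hn⟩
  exact chvatal_condition_d_general hw₀ hε₀
    (le_abs_partitionGap_of_mem_lowerBounds_disjointSumGaps hε.2) hx_large hc₀
    fun i ↦ by rw [ha]; split_ifs <;> simp
end
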